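/- Let G be a finite group of order p^a q^b with a + b > 0, where p and q are primes. Then G has a normal subgroup N with {1} ⊊ N, i.e., G is not simple unless it has prime order. -/

import Mathlib

/-!
Irreducible representations of `G` are the surjections `φ` from the group algebra `ℂ[G]` onto matrix
algebras; write `d` for the degree of `φ` and `χ` for its character.

If `|C|` is the size of the conjugacy class of `g`, then `|C| χ(g) / d` is the scalar by which the
class sum acts, hence an algebraic integer. When `|C|` and `d` are coprime, Bézout shows that
`χ(g) / d` is one too. An average of roots of unity that is an algebraic integer vanishes unless
they all agree, so either `χ(g) = 0` or `φ(g)` is a scalar matrix.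

Let `g ≠ 1` and let `p` be a prime. The trace of left multiplication by `g - e` on `ℂ[G]`, where `e`
is the average of the elements of `G`, is `-1`. Decomposing `ℂ[G]` into matrix algebras writes it as
the sum of the `d χ(g)` over the nontrivial irreducible representations, since `e` acts as `0` on
these, and as the identity on a trivial one. As `-1 / p` is not an algebraic integer, some
nontrivial `φ` has `χ(g) ≠ 0` and `p ∤ d`. If the class of `g` has `p`-power size, then `φ(g)` is a
scalar, and `g` is central when `G` is simple.

Finally, in a group of order `p ^ a * q ^ b`, a nontrivial element of the centre of a Sylow
`q`-subgroup has a class of `p`-power size.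
-/

section RootsOfUnity

lemma norm_multiset_sum_le_card {E : Type*} [SeminormedAddCommGroup E] {s : Multiset E}
    (hs : ∀ x ∈ s, ‖x‖ ≤ 1) : ‖s.sum‖ ≤ s.card := by
  calc ‖s.sum‖ ≤ (s.map (‖·‖)).sum := norm_multiset_sum_le s
    _ ≤ (s.map (‖·‖)).card • (1 : ℝ) :=
        Multiset.sum_le_card_nsmul _ _ (by simpa only [Multiset.forall_mem_map_iff] using hs)
    _ = s.card := by simp

lemma sum_eq_card_smul_of_norm_sum_eq_card {E : Type*} [NormedAddCommGroup E] [NormedSpace ℝ E]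
    [StrictConvexSpace ℝ E] {s : Multiset E} (hs : ∀ x ∈ s, ‖x‖ ≤ 1) (hsum : ‖s.sum‖ = s.card)
    {x : E} (hx : x ∈ s) : s.sum = (s.card : ℝ) • x := by
  obtain ⟨t, rfl⟩ := Multiset.exists_cons_of_mem hx
  rw [Multiset.forall_mem_cons] at hs
  simp only [Multiset.sum_cons, Multiset.card_cons, Nat.cast_add, Nat.cast_one] at hsum ⊢
  have ht : ‖t.sum‖ ≤ t.card := norm_multiset_sum_le_card hs.2
  have htriangle : ‖x + t.sum‖ ≤ ‖x‖ + ‖t.sum‖ := norm_add_le x t.sum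
  have hray : SameRay ℝ x t.sum := sameRay_iff_norm_add.mpr (by linarith [hs.1])
  have hx1 : ‖x‖ = 1 := by linarith [hs.1]
  have ht1 : ‖t.sum‖ = t.card := by linarith [hs.1]
  have hsmul : t.sum = (t.card : ℝ) • x := by
    simpa only [hx1, ht1, one_smul] using hray.norm_smul_eq
  rw [hsmul, add_smul, one_smul, add_comm]

lemma isIntegral_of_isOfFinOrder (R : Type*) {A : Type*} [CommRing R] [Ring A] [Algebra R A]
    {x : A} (hx : IsOfFinOrder x) : IsIntegral R x :=
  .of_pow hx.orderOf_pos (pow_orderOf_eq_one x ▸ isIntegral_one)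

lemma isOfFinOrder_sum_div_card_of_numberField {K : Type*} [Field K] [NumberField K]
    {s : Multiset K} (hs : ∀ x ∈ s, IsOfFinOrder x) (hint : IsIntegral ℤ (s.sum / s.card))
    (hsum : s.sum ≠ 0) : IsOfFinOrder (s.sum / s.card) := by
  have hcard : s.card ≠ 0 := by
    rw [Ne, Multiset.card_eq_zero]
    rintro rfl
    exact hsum Multiset.sum_zero
  have hconj (φ : K →+* ℂ) : ‖φ (s.sum / s.card)‖ ≤ 1 := by
    have hφs : ‖(s.map φ).sum‖ ≤ (s.map φ).card := norm_multiset_sum_le_card <| by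
      simp only [Multiset.forall_mem_map_iff]
      exact fun x hx ↦ ((φ : K →* ℂ).isOfFinOrder (hs x hx)).norm_eq_one.le
    rw [map_div₀, map_natCast, map_multiset_sum, norm_div, Complex.norm_natCast]
    exact div_le_one_of_le₀ (by simpa only [Multiset.card_map] using hφs) (Nat.cast_nonneg _)
  -- Kronecker: a nonzero algebraic integer all of whose conjugates have norm at most `1` is a root
  -- of unity.
  obtain ⟨m, hm, hpow⟩ := NumberField.Embeddings.pow_eq_one_of_norm_le_one K ℂ
    (div_ne_zero hsum (Nat.cast_ne_zero.mpr hcard)) hint hconj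
  exact isOfFinOrder_iff_pow_eq_one.mpr ⟨m, hm, hpow⟩

lemma isOfFinOrder_sum_div_card {L : Type*} [Field L] [CharZero L] {s : Multiset L}
    (hs : ∀ x ∈ s, IsOfFinOrder x) (hint : IsIntegral ℤ (s.sum / s.card)) (hsum : s.sum ≠ 0) :
    IsOfFinOrder (s.sum / s.card) := by
  classical
  let K := IntermediateField.adjoin ℚ (s.toFinset : Set L)
  have : FiniteDimensional ℚ K := IntermediateField.finiteDimensional_adjoin fun x hx ↦
    isIntegral_of_isOfFinOrder ℚ (hs x (by simpa using hx))
  have : NumberField K := {}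
  have hsK : ∀ x ∈ s, x ∈ K := fun x hx ↦ IntermediateField.subset_adjoin _ _ (by simpa using hx)
  obtain ⟨t, hts⟩ : ∃ t : Multiset K, t.map K.val = s := CanLift.prf s hsK
  have htsum : K.val t.sum = s.sum := by rw [map_multiset_sum, hts]
  have htavg : K.val (t.sum / t.card) = s.sum / s.card := by
    rw [map_div₀, map_natCast, htsum, ← Multiset.card_map K.val t, hts]
  have hval : Function.Injective (K.val : K →* L) := K.val.injective
  have ht (x : K) (hx : x ∈ t) : IsOfFinOrder x :=
    hval.isOfFinOrder_iff.mp (hs _ (hts ▸ Multiset.mem_map_of_mem _ hx))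
  rw [← htsum, map_ne_zero] at hsum
  rw [← htavg] at hint ⊢
  exact hval.isOfFinOrder_iff.mpr <| isOfFinOrder_sum_div_card_of_numberField ht
    ((isIntegral_algHom_iff (K.val.restrictScalars ℤ) hval).mp hint) hsum

lemma eq_sum_div_card_of_isIntegral {s : Multiset ℂ} (hs : ∀ x ∈ s, IsOfFinOrder x)
    (hint : IsIntegral ℤ (s.sum / s.card)) (hsum : s.sum ≠ 0) {x : ℂ} (hx : x ∈ s) :
    x = s.sum / s.card := by
  have hcard : (s.card : ℂ) ≠ 0 :=
    Nat.cast_ne_zero.mpr (Multiset.card_pos_iff_exists_mem.mpr ⟨x, hx⟩).ne'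
  have hnorm : ‖s.sum‖ = s.card := by
    have := (isOfFinOrder_sum_div_card hs hint hsum).norm_eq_one
    rwa [norm_div, Complex.norm_natCast, div_eq_one_iff_eq (mod_cast hcard)] at this
  have hsmul : s.sum = (s.card : ℝ) • x :=
    sum_eq_card_smul_of_norm_sum_eq_card (fun y hy ↦ (hs y hy).norm_eq_one.le) hnorm hx
  rw [hsmul, Complex.real_smul, Complex.ofReal_natCast, mul_div_cancel_left₀ x hcard]

end RootsOfUnity

section Matrices

open Polynomial

variable {n K : Type*} [Fintype n] [DecidableEq n] [Field K]

lemma isOfFinOrder_of_mem_roots_charpoly {A : Matrix n n K} (hA : IsOfFinOrder A) {x : K}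
    (hx : x ∈ A.charpoly.roots) : IsOfFinOrder x := by
  have hspec : x ∈ spectrum K A :=
    Matrix.mem_spectrum_iff_isRoot_charpoly.mpr (isRoot_of_mem_roots hx)
  have : Nontrivial (Matrix n n K) := by
    contrapose! hspec
    simp [spectrum.of_subsingleton]
  have hpow : x ^ orderOf A ∈ spectrum K (1 : Matrix n n K) :=
    pow_orderOf_eq_one A ▸ spectrum.pow_mem_pow A _ hspec
  rw [spectrum.one_eq, Set.mem_singleton_iff] at hpow
  exact isOfFinOrder_iff_pow_eq_one.mpr ⟨orderOf A, hA.orderOf_pos, hpow⟩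

lemma isIntegral_trace_of_isOfFinOrder [IsAlgClosed K] {A : Matrix n n K} (hA : IsOfFinOrder A) :
    IsIntegral ℤ A.trace := by
  rw [Matrix.trace_eq_sum_roots_charpoly]
  exact .multiset_sum fun x hx ↦
    isIntegral_of_isOfFinOrder ℤ (isOfFinOrder_of_mem_roots_charpoly hA hx)

lemma eq_scalar_of_charpoly_eq_pow [CharZero K] {A : Matrix n n K} (hA : IsOfFinOrder A) {u : K}
    {k : ℕ} (hu : A.charpoly = (X - C u) ^ k) : A = Matrix.scalar n u := by
  have hsep : (X ^ orderOf A - 1 : K[X]).Separable :=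
    X_pow_sub_one_separable_iff.mpr (Nat.cast_ne_zero.mpr hA.orderOf_pos.ne')
  have hsqfree : Squarefree (minpoly K A) :=
    hsep.squarefree.squarefree_of_dvd (minpoly.dvd K A (by simp [pow_orderOf_eq_one]))
  have hdvd : minpoly K A ∣ X - C u :=
    hsqfree.isRadical k _ (hu ▸ Matrix.minpoly_dvd_charpoly A)
  have hzero : aeval A (X - C u) = 0 := minpoly.dvd_iff.mp hdvd
  rwa [map_sub, aeval_X, aeval_C, sub_eq_zero] at hzero

lemma eq_scalar_of_isIntegral_trace_div_card {A : Matrix n n ℂ} (hA : IsOfFinOrder A)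
    (hint : IsIntegral ℤ (A.trace / Fintype.card n)) (htrace : A.trace ≠ 0) :
    A = Matrix.scalar n (A.trace / Fintype.card n) := by
  have hsplits : A.charpoly.Splits := IsAlgClosed.splits _
  have hcard : A.charpoly.roots.card = Fintype.card n := by
    rw [← hsplits.natDegree_eq_card_roots, A.charpoly_natDegree_eq_dim]
  have hroots : A.charpoly.roots =
      Multiset.replicate (Fintype.card n) (A.trace / Fintype.card n) := by
    refine Multiset.eq_replicate.mpr ⟨hcard, fun x hx ↦ ?_⟩
    rw [Matrix.trace_eq_sum_roots_charpoly] at htrace hint ⊢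
    rw [← hcard] at hint ⊢
    exact eq_sum_div_card_of_isIntegral (fun y ↦ isOfFinOrder_of_mem_roots_charpoly hA)
      hint htrace hx
  refine eq_scalar_of_charpoly_eq_pow hA (k := Fintype.card n) ?_
  rw [hsplits.eq_prod_roots_of_monic A.charpoly_monic, hroots, Multiset.map_replicate,
    Multiset.prod_replicate]

end Matrices

section TraceMulLeft

variable {R A B : Type*} [CommRing R] [Ring A] [Algebra R A] [Ring B] [Algebra R B]

lemma trace_mulLeft_map_algEquiv (e : A ≃ₐ[R] B) (x : A) :
    LinearMap.trace R B (.mulLeft R (e x)) = LinearMap.trace R A (.mulLeft R x) := by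
  have hconj : LinearMap.mulLeft R (e x) = e.toLinearEquiv.conj (LinearMap.mulLeft R x) := by
    ext y
    simp [LinearEquiv.conj_apply]
  rw [hconj, LinearMap.trace_conj']

lemma trace_mulLeft_pi {ι : Type*} [Fintype ι] {A : ι → Type*} [∀ i, Ring (A i)]
    [∀ i, Algebra R (A i)] [∀ i, Module.Free R (A i)] [∀ i, Module.Finite R (A i)]
    (x : ∀ i, A i) :
    LinearMap.trace R (∀ i, A i) (.mulLeft R x) =
      ∑ i, LinearMap.trace R (A i) (.mulLeft R (x i)) := by
  classical
  let b (i : ι) := Module.Free.chooseBasis R (A i)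
  simp_rw [LinearMap.trace_eq_matrix_trace R (Pi.basis b),
    fun i ↦ LinearMap.trace_eq_matrix_trace R (b i), Matrix.trace, Fintype.sum_sigma,
    Matrix.diag_apply, LinearMap.toMatrix_apply]
  simp [Pi.basis_repr]

lemma trace_mulLeft_matrix {n : Type*} [Fintype n] (M : Matrix n n R) :
    LinearMap.trace R (Matrix n n R) (.mulLeft R M) = Fintype.card n * M.trace := by
  classical
  rw [LinearMap.trace_eq_matrix_trace R (Matrix.stdBasis R n n), Matrix.trace,
    Fintype.sum_prod_type]
  have hrepr (N : Matrix n n R) (i j : n) : (Matrix.stdBasis R n n).repr N (i, j) = N i j := by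
    simp [Matrix.stdBasis]
  simp [Algebra.leftMulMatrix_eq_repr_mul, hrepr, Matrix.stdBasis_eq_single, Matrix.trace,
    Finset.mul_sum]

lemma trace_mulLeft_monoidAlgebra {G : Type*} [Group G] [Fintype G] (x : MonoidAlgebra R G) :
    LinearMap.trace R (MonoidAlgebra R G) (.mulLeft R x) = Fintype.card G * x.coeff 1 := by
  classical
  rw [LinearMap.trace_eq_matrix_trace R (MonoidAlgebra.basis G R), Matrix.trace]
  simp [Algebra.leftMulMatrix_eq_repr_mul, MonoidAlgebra.basis]

end TraceMulLeft

lemma exists_surjective_algHom_matrix_trace_mulLeft_eq (F A : Type*) [Field F] [IsAlgClosed F]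
    [Ring A] [Algebra F A] [IsSemisimpleRing A] [FiniteDimensional F A] :
    ∃ (r : ℕ) (d : Fin r → ℕ) (φ : ∀ i, A →ₐ[F] Matrix (Fin (d i)) (Fin (d i)) F),
      (∀ i, Function.Surjective (φ i)) ∧
        ∀ x, LinearMap.trace F A (.mulLeft F x) = ∑ i, d i * (φ i x).trace := by
  obtain ⟨r, d, -, ⟨e⟩⟩ := IsSemisimpleRing.exists_algEquiv_pi_matrix_of_isAlgClosed F A
  let φ (i : Fin r) : A →ₐ[F] Matrix (Fin (d i)) (Fin (d i)) F :=
    (Pi.evalAlgHom F (fun i ↦ Matrix (Fin (d i)) (Fin (d i)) F) i).comp e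
  refine ⟨r, d, φ, fun i ↦ (Function.surjective_eval i).comp e.surjective, fun x ↦ ?_⟩
  rw [← trace_mulLeft_map_algEquiv e, trace_mulLeft_pi]
  simp [φ, trace_mulLeft_matrix]

lemma exists_map_eq_scalar_of_mem_center {n R A : Type*} [Fintype n] [DecidableEq n] [CommRing R]
    [Ring A] {f : A →+* Matrix n n R} (hf : Function.Surjective f) {z : A}
    (hz : z ∈ Set.center A) : ∃ c, f z = Matrix.scalar n c := by
  have hcenter : f z ∈ Set.center (Matrix n n R) := by
    rw [Semigroup.mem_center_iff] at hz ⊢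
    intro M
    obtain ⟨x, rfl⟩ := hf M
    rw [← map_mul, hz, map_mul]
  rw [Matrix.center_eq_range] at hcenter
  obtain ⟨c, hc⟩ := hcenter
  exact ⟨c, hc.symm⟩

lemma mem_center_of_forall_of_mul_eq {R M : Type*} [CommSemiring R] [Monoid M]
    {z : MonoidAlgebra R M}
    (hz : ∀ m, MonoidAlgebra.of R M m * z = z * MonoidAlgebra.of R M m) :
    z ∈ Set.center (MonoidAlgebra R M) := by
  refine Semigroup.mem_center_iff.mpr fun x ↦ ?_
  induction x using MonoidAlgebra.induction_on with
  | of m => exact hz m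
  | add x y hx hy => rw [add_mul, mul_add, hx, hy]
  | smul r x hx => rw [smul_mul_assoc, mul_smul_comm, hx]

section ClassSum

variable {R G : Type*} [CommRing R] [Group G] [Finite G]

/-- The sum of the elements of the conjugacy class `C` in the group algebra: a central element,
integral over `ℤ`, through which `|C|` enters the theory of characters. -/
noncomputable def conjClassSum (R : Type*) [CommRing R] (C : ConjClasses G) : MonoidAlgebra R G :=
  ∑ x ∈ C.carrier.toFinite.toFinset, MonoidAlgebra.of R G x

lemma conjClassSum_mem_center (C : ConjClasses G) :
    conjClassSum R C ∈ Set.center (MonoidAlgebra R G) := by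
  refine mem_center_of_forall_of_mul_eq fun h ↦ ?_
  rw [conjClassSum, Finset.mul_sum, Finset.sum_mul]
  refine Finset.sum_equiv (MulAut.conj h).toEquiv (fun x ↦ ?_) fun x _ ↦ ?_
  · have hconj : IsConj x (h * x * h⁻¹) := isConj_iff.mpr ⟨h, rfl⟩
    simp [ConjClasses.mem_carrier_iff_mk_eq, ConjClasses.mk_eq_mk_iff_isConj.mpr hconj]
  · simp

lemma isIntegral_conjClassSum (C : ConjClasses G) : IsIntegral ℤ (conjClassSum R C) := by
  have hmap : MonoidAlgebra.mapRingHom G (Int.castRingHom R) (conjClassSum ℤ C) =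
      conjClassSum R C := by
    simp [conjClassSum]
  have hint : IsIntegral ℤ (conjClassSum ℤ C) := .of_finite ℤ _
  exact hmap ▸ hint.map (MonoidAlgebra.mapRingHom G (Int.castRingHom R)).toIntAlgHom

variable {n : Type*} [Fintype n] [DecidableEq n]

lemma trace_map_conjClassSum {S : Type*} [CommRing S]
    (f : MonoidAlgebra R G →+* Matrix n n S) (g : G) :
    (f (conjClassSum R (ConjClasses.mk g))).trace =
      Nat.card (ConjClasses.mk g).carrier * (f (MonoidAlgebra.of R G g)).trace := by
  have hconst : ∀ x ∈ (ConjClasses.mk g).carrier.toFinite.toFinset,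
      (f (MonoidAlgebra.of R G x)).trace = (f (MonoidAlgebra.of R G g)).trace := by
    intro x hx
    obtain ⟨h, rfl⟩ := isConj_iff.mp (ConjClasses.mk_eq_mk_iff_isConj.mp
      (ConjClasses.mem_carrier_iff_mk_eq.mp ((Set.Finite.mem_toFinset _).mp hx)).symm)
    rw [map_mul, map_mul, Matrix.trace_mul_comm, ← map_mul, ← map_mul]
    group
  rw [conjClassSum, map_sum, Matrix.trace_sum, Finset.sum_congr rfl hconst, Finset.sum_const,
    nsmul_eq_mul, ← Set.ncard_eq_toFinset_card]
  rfl

end ClassSum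

lemma isOfFinOrder_map_of {R G A : Type*} [Semiring R] [Group G] [Finite G] [Semiring A]
    (f : MonoidAlgebra R G →+* A) (g : G) : IsOfFinOrder (f (MonoidAlgebra.of R G g)) :=
  ((f : MonoidAlgebra R G →* A).comp (MonoidAlgebra.of R G)).isOfFinOrder (isOfFinOrder_of_finite g)

section Burnside

variable {R F G n : Type*} [CommRing R] [Field F] [CharZero F] [Group G] [Finite G] [Fintype n]
  [DecidableEq n]

lemma isIntegral_card_carrier_mul_trace_div_card [Nonempty n]
    {f : MonoidAlgebra R G →+* Matrix n n F} (hf : Function.Surjective f) (g : G) :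
    IsIntegral ℤ (Nat.card (ConjClasses.mk g).carrier *
      ((f (MonoidAlgebra.of R G g)).trace / Fintype.card n)) := by
  obtain ⟨c, hc⟩ := exists_map_eq_scalar_of_mem_center hf
    (conjClassSum_mem_center (ConjClasses.mk g))
  have hint : IsIntegral ℤ (Matrix.scalar n c) :=
    hc ▸ (isIntegral_conjClassSum (ConjClasses.mk g)).map f.toIntAlgHom
  have hscalar : Function.Injective (Matrix.scalar (α := F) n).toIntAlgHom :=
    fun _ _ ↦ Matrix.scalar_inj.mp
  have htrace : c * Fintype.card n =
      Nat.card (ConjClasses.mk g).carrier * (f (MonoidAlgebra.of R G g)).trace := by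
    rw [← trace_map_conjClassSum, hc, Matrix.scalar_apply, Matrix.trace_diagonal, Finset.sum_const,
      Finset.card_univ, nsmul_eq_mul, mul_comm]
  rw [← mul_div_assoc, ← htrace,
    mul_div_cancel_right₀ c (Nat.cast_ne_zero.mpr Fintype.card_ne_zero)]
  exact (isIntegral_algHom_iff _ hscalar).mp hint

lemma isIntegral_trace_div_card_of_coprime [IsAlgClosed F] [Nonempty n]
    {f : MonoidAlgebra R G →+* Matrix n n F} (hf : Function.Surjective f) {g : G}
    (hcop : (Nat.card (ConjClasses.mk g).carrier).Coprime (Fintype.card n)) :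
    IsIntegral ℤ ((f (MonoidAlgebra.of R G g)).trace / Fintype.card n) := by
  have hn : (Fintype.card n : F) ≠ 0 := Nat.cast_ne_zero.mpr Fintype.card_ne_zero
  set χ := (f (MonoidAlgebra.of R G g)).trace
  have hχ : IsIntegral ℤ χ := isIntegral_trace_of_isOfFinOrder (isOfFinOrder_map_of f g)
  have hCχ : IsIntegral ℤ (Nat.card (ConjClasses.mk g).carrier * (χ / Fintype.card n)) :=
    isIntegral_card_carrier_mul_trace_div_card hf g
  obtain ⟨u, v, huv⟩ := Nat.isCoprime_iff_coprime.mpr hcop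
  have hbezout : χ / Fintype.card n =
      u * (Nat.card (ConjClasses.mk g).carrier * (χ / Fintype.card n)) + v * χ := by
    have huvF : (u * Nat.card (ConjClasses.mk g).carrier + v * Fintype.card n : F) = 1 :=
      mod_cast congrArg (Int.cast : ℤ → F) huv
    field_simp
    linear_combination -χ * huvF
  rw [hbezout]
  exact (isIntegral_algebraMap.mul hCχ).add (isIntegral_algebraMap.mul hχ)

lemma trace_eq_zero_or_eq_scalar_of_coprime {f : MonoidAlgebra R G →+* Matrix n n ℂ}
    (hf : Function.Surjective f) {g : G}
    (hcop : (Nat.card (ConjClasses.mk g).carrier).Coprime (Fintype.card n)) :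
    (f (MonoidAlgebra.of R G g)).trace = 0 ∨
      ∃ c, f (MonoidAlgebra.of R G g) = Matrix.scalar n c := by
  refine or_iff_not_imp_left.mpr fun htrace ↦
    ⟨(f (MonoidAlgebra.of R G g)).trace / Fintype.card n, ?_⟩
  have : Nonempty n := by
    contrapose! htrace
    exact Matrix.trace_eq_zero_of_isEmpty _
  exact eq_scalar_of_isIntegral_trace_div_card (isOfFinOrder_map_of f g)
    (isIntegral_trace_div_card_of_coprime hf hcop) htrace

end Burnside

lemma average_mem_center (R G : Type*) [CommRing R] [Group G] [Fintype G]
    [Invertible (Fintype.card G : R)] :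
    GroupAlgebra.average R G ∈ Set.center (MonoidAlgebra R G) := by
  refine mem_center_of_forall_of_mul_eq fun g ↦ ?_
  rw [MonoidAlgebra.of_apply, GroupAlgebra.mul_average_left, GroupAlgebra.mul_average_right]

lemma map_average_eq_zero {R S G n : Type*} [CommRing R] [CommRing S] [IsDomain S] [Group G]
    [Fintype G] [Invertible (Fintype.card G : R)] [Fintype n] [DecidableEq n]
    {f : MonoidAlgebra R G →+* Matrix n n S} (hf : Function.Surjective f) {h : G}
    (hh : f (MonoidAlgebra.of R G h) ≠ 1) : f (GroupAlgebra.average R G) = 0 := by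
  obtain ⟨c, hc⟩ := exists_map_eq_scalar_of_mem_center hf (average_mem_center R G)
  have hsmul : c • (f (MonoidAlgebra.of R G h) - 1) = 0 := by
    have := congrArg f (GroupAlgebra.mul_average_left R G h)
    rw [map_mul, hc, ← Matrix.scalar_comm c (fun r ↦ Commute.all _ r)] at this
    rw [smul_sub, sub_eq_zero, MonoidAlgebra.of_apply]
    simpa [Matrix.smul_eq_diagonal_mul, Matrix.smul_one_eq_diagonal] using this
  rw [hc, (smul_eq_zero.mp hsmul).resolve_right (sub_ne_zero.mpr hh), map_zero]

lemma coeff_one_average (R G : Type*) [CommRing R] [Group G] [Fintype G]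
    [Invertible (Fintype.card G : R)] :
    (GroupAlgebra.average R G).coeff 1 = ⅟(Fintype.card G : R) := by
  classical
  simp [GroupAlgebra.average]

section NontrivialIrreducible

variable {F G : Type*} [Field F] [IsAlgClosed F] [Group G] [Fintype G]
  [Invertible (Fintype.card G : F)]

lemma exists_isIntegral_mul_trace_sub_average_eq {n : Type*} [Fintype n] [DecidableEq n]
    {φ : MonoidAlgebra F G →ₐ[F] Matrix n n F} (hφ : Function.Surjective φ) {g : G} {p : ℕ}
    (hg : (∃ h, φ (MonoidAlgebra.of F G h) ≠ 1) →
      p ∣ Fintype.card n ∨ (φ (MonoidAlgebra.of F G g)).trace = 0) :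
    ∃ β : F, IsIntegral ℤ β ∧
      Fintype.card n * (φ (MonoidAlgebra.of F G g - GroupAlgebra.average F G)).trace = p * β := by
  by_cases htriv : ∀ h, φ (MonoidAlgebra.of F G h) = 1
  · have haverage : φ (GroupAlgebra.average F G) = 1 := by
      rw [GroupAlgebra.average, map_smul, map_sum, Finset.sum_congr rfl fun h _ ↦ htriv h,
        Finset.sum_const, Finset.card_univ, ← Nat.cast_smul_eq_nsmul F, invOf_smul_smul]
    refine ⟨0, isIntegral_zero, ?_⟩
    rw [map_sub, htriv, haverage, sub_self, Matrix.trace_zero, mul_zero, mul_zero]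
  · push Not at htriv
    obtain ⟨h, hh⟩ := htriv
    have haverage : φ (GroupAlgebra.average F G) = 0 :=
      map_average_eq_zero (f := φ.toRingHom) hφ hh
    rw [map_sub, haverage, sub_zero]
    rcases hg ⟨h, hh⟩ with ⟨m, hm⟩ | hzero
    · have hχ : IsIntegral ℤ (φ (MonoidAlgebra.of F G g)).trace :=
        isIntegral_trace_of_isOfFinOrder (isOfFinOrder_map_of φ.toRingHom g)
      exact ⟨m * (φ (MonoidAlgebra.of F G g)).trace, (isIntegral_natCast m).mul hχ,
        by rw [hm, Nat.cast_mul, mul_assoc]⟩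
    · exact ⟨0, isIntegral_zero, by rw [hzero, mul_zero, mul_zero]⟩

lemma exists_surjective_algHom_matrix_trace_ne_zero [CharZero F] {g : G} (hg : g ≠ 1) {p : ℕ}
    (hp : p ≠ 1) :
    ∃ (d : ℕ) (φ : MonoidAlgebra F G →ₐ[F] Matrix (Fin d) (Fin d) F),
      Function.Surjective φ ∧ (∃ h, φ (MonoidAlgebra.of F G h) ≠ 1) ∧ ¬ p ∣ d ∧
        (φ (MonoidAlgebra.of F G g)).trace ≠ 0 := by
  by_contra! hcon
  obtain ⟨r, d, φ, hφ, htrace⟩ :=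
    exists_surjective_algHom_matrix_trace_mulLeft_eq F (MonoidAlgebra F G)
  have hterm (i : Fin r) : ∃ β : F, IsIntegral ℤ β ∧
      d i * (φ i (MonoidAlgebra.of F G g - GroupAlgebra.average F G)).trace = p * β := by
    simpa only [Fintype.card_fin] using exists_isIntegral_mul_trace_sub_average_eq (hφ i) fun hi ↦
      or_iff_not_imp_left.mpr (by simpa only [Fintype.card_fin] using hcon (d i) (φ i) (hφ i) hi)
  choose β hβ hpβ using hterm
  have hsum : p * ∑ i, β i = -1 := by
    calc p * ∑ i, β i
        = LinearMap.trace F _ (.mulLeft F (MonoidAlgebra.of F G g - GroupAlgebra.average F G)) := by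
          rw [htrace, Finset.mul_sum, Finset.sum_congr rfl fun i _ ↦ hpβ i]
      _ = Fintype.card G * (0 - ⅟(Fintype.card G : F)) := by
          rw [trace_mulLeft_monoidAlgebra, MonoidAlgebra.coeff_sub, Finsupp.sub_apply,
            coeff_one_average, MonoidAlgebra.of_apply, MonoidAlgebra.coeff_single,
            Finsupp.single_eq_of_ne hg.symm]
      _ = -1 := by rw [zero_sub, mul_neg, mul_invOf_self]
  have hunit : IsUnit (algebraMap ℤ (integralClosure ℤ F) p) :=
    .of_mul_eq_one ⟨-∑ i, β i, (IsIntegral.sum _ fun i _ ↦ hβ i).neg⟩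
      (Subtype.ext (by simp [hsum]))
  exact hp (Nat.isUnit_iff.mp (Int.ofNat_isUnit.mp (isUnit_of_map_unit _ _ hunit)))

end NontrivialIrreducible

section SimpleGroup

variable {G : Type*} [Group G]

lemma prime_card_of_center_ne_bot [IsSimpleGroup G] (h : Subgroup.center G ≠ ⊥) :
    (Nat.card G).Prime := by
  have htop : Subgroup.center G = ⊤ :=
    Subgroup.Normal.eq_bot_or_eq_top inferInstance |>.resolve_left h
  let _ : CommGroup G := Group.commGroupOfCenterEqTop htop
  exact IsSimpleGroup.prime_card

lemma card_carrier_eq_index_centralizer (g : G) :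
    Nat.card (ConjClasses.mk g).carrier = (Subgroup.centralizer {g}).index := by
  rw [← ConjAct.orbit_eq_carrier_conjClasses]
  exact (MulAction.index_stabilizer (ConjAct G) g).symm.trans
    (congrArg Subgroup.index (ConjAct.stabilizer_eq_centralizer g))

lemma exists_ne_one_le_centralizer_of_isPGroup {p : ℕ} [Fact p.Prime] {H : Subgroup G}
    [Finite H] (hH : IsPGroup p H) (hbot : H ≠ ⊥) :
    ∃ z : G, z ≠ 1 ∧ H ≤ Subgroup.centralizer {z} := by
  have : Nontrivial H := (Subgroup.nontrivial_iff_ne_bot H).mpr hbot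
  have : Nontrivial (Subgroup.center H) := hH.center_nontrivial
  obtain ⟨⟨z, hz⟩, hz1⟩ := exists_ne (1 : Subgroup.center H)
  refine ⟨z, fun h ↦ hz1 (Subtype.ext (Subtype.ext h)), fun x hx ↦ ?_⟩
  exact Subgroup.mem_centralizer_singleton_iff.mpr
    (congrArg Subtype.val (Subgroup.mem_center_iff.mp hz ⟨x, hx⟩))

variable [Finite G]

lemma mem_center_of_card_carrier_eq_prime_pow [IsSimpleGroup G] {p k : ℕ} (hp : p.Prime) {g : G}
    (hg : Nat.card (ConjClasses.mk g).carrier = p ^ k) : g ∈ Subgroup.center G := by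
  rcases eq_or_ne g 1 with rfl | hg1
  · exact one_mem _
  have := Fintype.ofFinite G
  have : Invertible (Fintype.card G : ℂ) := invertibleOfNonzero (mod_cast Fintype.card_ne_zero)
  obtain ⟨d, φ, hφ, ⟨h, hh⟩, hpd, htrace⟩ :=
    exists_surjective_algHom_matrix_trace_ne_zero (F := ℂ) hg1 hp.ne_one
  have hcop : (Nat.card (ConjClasses.mk g).carrier).Coprime (Fintype.card (Fin d)) := by
    rw [hg, Fintype.card_fin]
    exact ((Nat.Prime.coprime_iff_not_dvd hp).mpr hpd).pow_left k
  obtain ⟨c, hc⟩ : ∃ c, φ (MonoidAlgebra.of ℂ G g) = Matrix.scalar (Fin d) c :=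
    (trace_eq_zero_or_eq_scalar_of_coprime (f := φ.toRingHom) hφ hcop).resolve_left htrace
  let ρ : G →* Matrix (Fin d) (Fin d) ℂ := (φ : _ →* _).comp (MonoidAlgebra.of ℂ G)
  have hker : ρ.ker = ⊥ := ρ.normal_ker.eq_bot_or_eq_top.resolve_right fun htop ↦
    hh (MonoidHom.mem_ker.mp (htop ▸ Subgroup.mem_top h : h ∈ ρ.ker))
  refine Subgroup.mem_center_iff.mpr fun x ↦ (MonoidHom.ker_eq_bot_iff ρ).mp hker ?_
  have hρg : ρ g = Matrix.scalar (Fin d) c := hc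
  rw [map_mul, map_mul, hρg]
  exact (Matrix.scalar_commute c (fun r ↦ Commute.all _ r) (ρ x)).eq.symm

lemma prime_card_of_card_eq_prime_pow_mul_prime_pow [IsSimpleGroup G] {p q a b : ℕ}
    (hp : p.Prime) (hq : q.Prime) (hcard : Nat.card G = p ^ a * q ^ b) : (Nat.card G).Prime := by
  wlog hb : b ≠ 0 generalizing p q a b
  · rw [not_not] at hb
    refine this hq hp (hcard.trans (mul_comm _ _)) ?_
    rintro rfl
    exact Finite.one_lt_card.ne' (by rw [hcard, hb, pow_zero, pow_zero, one_mul])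
  have : Fact q.Prime := ⟨hq⟩
  obtain ⟨Q⟩ : Nonempty (Sylow q G) := inferInstance
  obtain ⟨z, hz, hQz⟩ := exists_ne_one_le_centralizer_of_isPGroup Q.isPGroup'
    (Q.ne_bot_of_dvd_card (hcard ▸ dvd_mul_of_dvd_right (dvd_pow_self q hb) _))
  have hindex : Q.index ∣ p ^ a :=
    (((Nat.Prime.coprime_iff_not_dvd hq).mpr Q.not_dvd_index).symm.pow_right b).dvd_of_dvd_mul_right
      (hcard ▸ Q.index_dvd_card)
  obtain ⟨k, -, hk⟩ := (Nat.dvd_prime_pow hp).mp ((Subgroup.index_dvd_of_le hQz).trans hindex)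
  have hcenter : z ∈ Subgroup.center G := mem_center_of_card_carrier_eq_prime_pow hp
    ((card_carrier_eq_index_centralizer z).trans hk)
  refine prime_card_of_center_ne_bot fun hbot ↦ hz ?_
  exact Subgroup.mem_bot.mp (hbot ▸ hcenter)

end SimpleGroup

theorem stmt_5 (G : Type) [Group G] [Fintype G]
    (p q a b : ℕ) (hp : p.Prime) (hq : q.Prime) (hab : 0 < a + b)
    (hcard : Fintype.card G = p ^ a * q ^ b) :
    (Fintype.card G).Prime ∨
      ∃ N : Subgroup G, N.Normal ∧ N ≠ ⊥ ∧ N ≠ ⊤ := by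
  refine or_iff_not_imp_right.mpr fun hnormal ↦ ?_
  push Not at hnormal
  have hcard_gt_one : 1 < Fintype.card G := by
    calc 1 < 2 ^ (a + b) := Nat.one_lt_two_pow hab.ne'
      _ = 2 ^ a * 2 ^ b := pow_add 2 a b
      _ ≤ p ^ a * q ^ b := by gcongr; exacts [hp.two_le, hq.two_le]
      _ = Fintype.card G := hcard.symm
  have : Nontrivial G := Fintype.one_lt_card_iff_nontrivial.mp hcard_gt_one
  have : IsSimpleGroup G :=
    { eq_bot_or_eq_top_of_normal := fun N hN ↦ or_iff_not_imp_left.mpr (hnormal N hN) }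
  rw [← Nat.card_eq_fintype_card] at hcard ⊢
  exact prime_card_of_card_eq_prime_pow_mul_prime_pow hp hq hcard
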